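/- Let (X,d) be a complete metric space that is doubling with constant D ∈ ℕ, let β ∈ (0,1), let S ⊆ X, and let a (β,β)-Schmidt subgame with target set S be given by data (ι, c, r, (T^i)) as in the context. If Player 1 has a pure strategy that guarantees δ ∈ ℝ in the non-overlapping Hausdorff dimension game associated with this subgame and target set S, then dim_H(S) ≥ δ. -/

import Mathlib

open Metric Set Filter
open scoped ENNReal Classical

/-- A tree of finite sequences: nonempty, prefix-closed, every position has a one-step
extension. -/
def IsTree {A : Type*} (T : Set (List A)) : Prop :=
  T.Nonempty ∧ (∀ p ∈ T, ∀ q : List A, q <+: p → q ∈ T) ∧ ∀ p ∈ T, ∃ a : A, p ++ [a] ∈ T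

/-- `X` is a doubling metric space with doubling constant `D`. -/
def IsDoublingWith (X : Type*) [PseudoMetricSpace X] (D : ℕ) : Prop :=
  ∀ (x : X) (r : ℝ), 0 < r → ∃ t : Finset X, t.card ≤ D ∧
    closedBall x r ⊆ ⋃ y ∈ t, closedBall y (r / 2)

variable {X : Type*} [MetricSpace X]

/-- `T` is a tree of centers for the `(β,β)`-Schmidt subgame with initial ball `B̄(c,ρ)`:
along every position, `B̄(y_k, β^(k+1)·ρ) ⊆ B̄(y_(k-1), β^k·ρ)` where `y₋₁ = c`. -/
def IsBetaSchmidtTree (β : ℝ) (c : X) (ρ : ℝ) (T : Set (List X)) : Prop :=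
  IsTree T ∧ ∀ p ∈ T, ∀ k : ℕ, k < p.length →
    closedBall (p.getD k c) (β ^ (k + 1) * ρ) ⊆
      if k = 0 then closedBall c ρ else closedBall (p.getD (k - 1) c) (β ^ k * ρ)

/-- The history `⟨p 0, …, p (n-1)⟩` of Player 2's choices. -/
def histList {X : Type*} (p : ℕ → List X) (n : ℕ) : List (List X) :=
  List.ofFn fun j : Fin n => p j

/-- `τ` is a legal pure strategy of Player 1 (with shrinking exponent `k`, on the tree `Ti`
with initial ball `B̄(c,ρ)`) in the associated non-overlapping Hausdorff dimension game:
along every consistent history, the offered set of positions is nonempty, consists of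
positions of `Ti` of length `(n+1)·k` extending the previously chosen position, and the
associated closed balls have pairwise disjoint interiors. -/
def Valid1 (β : ℝ) (c : X) (ρ : ℝ) (Ti : Set (List X)) (k : ℕ)
    (τ : List (List X) → Set (List X)) : Prop :=
  ∀ (p : ℕ → List X) (n : ℕ), (∀ j < n, p j ∈ τ (histList p j)) →
    (τ (histList p n)).Nonempty ∧
    (∀ q ∈ τ (histList p n), q ∈ Ti ∧ q.length = (n + 1) * k ∧ (n = 0 ∨ p (n - 1) <+: q)) ∧
    (τ (histList p n)).Pairwise fun q q' =>
      Disjoint (interior (closedBall (q.getLastD c) (β ^ ((n + 1) * k) * ρ)))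
        (interior (closedBall (q'.getLastD c) (β ^ ((n + 1) * k) * ρ)))

/-- The strategy `τ` of Player 1 guarantees `δ` in the non-overlapping Hausdorff dimension
game with target set `S`: every play consistent with `τ` has payoff at least `δ`, the
payoff being `liminf_N (1/N) Σ_{n<N} log|Aₙ| / (k·log(1/β))` if the intersection of the
chosen balls is contained in `S`, and `-1` otherwise. -/
noncomputable def Guarantees1 (β : ℝ) (c : X) (ρ : ℝ) (S : Set X) (k : ℕ)
    (τ : List (List X) → Set (List X)) (δ : ℝ) : Prop :=
  ∀ p : ℕ → List X, (∀ n : ℕ, p n ∈ τ (histList p n)) →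
    δ ≤ if (⋂ n : ℕ, closedBall ((p n).getLastD c) (β ^ ((n + 1) * k) * ρ)) ⊆ S then
          Filter.liminf (fun N : ℕ =>
            (1 / (N : ℝ)) * ∑ n ∈ Finset.range N,
              Real.log ((τ (histList p n)).ncard) / (k * Real.log (1 / β)))
            Filter.atTop
        else -1

/-!
Let Player 2 choose uniformly at random and let the weight of a history be its probability. Suppose
all plays end in a set of zero `s`-dimensional Hausdorff measure. If, beyond some history `u`, no
weight exceeded the `s`-th power of the radius of the current ball, the law of the limit point of a
random play through `u` would satisfy the mass distribution principle: disjointness of the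
interiors and doubling bound the number of current balls that meet a set of comparable diameter.
Its mass would then be zero, although it is at least the weight of `u`. Hence every history has a
proper extension of weight exceeding the `s`-th power of its radius, and passing from extension to
extension gives a play along which this happens infinitely often. Minus the logarithm of the weight
is the sum of the `log |Aₙ|`, so the payoff of this play is at most `s`.
-/

section MassDistribution

open MeasureTheory Measure
open scoped Topology

lemma outerMeasure_eq_zero_of_hausdorffMeasure_eq_zero {Y : Type*} [EMetricSpace Y]
    [MeasurableSpace Y] [BorelSpace Y] {μ : OuterMeasure Y} {c r : ℝ≥0∞}
    (hc : c ≠ ⊤) (hr : 0 < r) {s : ℝ} (hμ : ∀ U, ediam U ≤ r → μ U ≤ c * ediam U ^ s)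
    {E : Set Y} (hE : μH[s] E = 0) : μ E = 0 := by
  have hc' : c + 1 ≠ ⊤ := ENNReal.add_ne_top.2 ⟨hc, ENNReal.one_ne_top⟩
  have hle : μ ≤ OuterMeasure.mkMetric ((c + 1) • fun d : ℝ≥0∞ => d ^ s) :=
    OuterMeasure.le_mkMetric _ μ r hr fun U hU =>
      (hμ U hU).trans (mul_le_mul_left le_self_add _)
  rw [OuterMeasure.mkMetric_smul _ hc' (by simp)] at hle
  refine le_antisymm ((hle E).trans_eq ?_) zero_le
  rw [_root_.smul_apply, OuterMeasure.coe_mkMetric]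
  exact (congrArg _ hE).trans (smul_zero _)

lemma exists_le_and_succ_lt_of_tendsto {γ : Type*} [LinearOrder γ] [TopologicalSpace γ]
    [ClosedIciTopology γ] {R : ℕ → γ} {l d : γ} (hR : Tendsto R atTop (𝓝 l)) (hd : l < d) {N : ℕ}
    (hdN : d ≤ R N) : ∃ n ≥ N, d ≤ R n ∧ R (n + 1) < d := by
  by_contra! hle
  have hall : ∀ n ≥ N, d ≤ R n := fun n hn =>
    Nat.le_induction hdN (fun n hn ih => hle n hn ih) n hn
  exact hd.not_ge (ge_of_tendsto hR (eventually_atTop.2 ⟨N, hall⟩))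

lemma le_mul_ediam_rpow_of_le_scale {Y : Type*} [PseudoEMetricSpace Y] {R : ℕ → ℝ≥0∞}
    {μ : OuterMeasure Y} {s : ℝ} {C K : ℝ≥0∞} (hs : 0 < s) (hC : C ≠ ⊤)
    (hR : Tendsto R atTop (𝓝 0)) (hRK : ∀ n, R n ≤ K * R (n + 1)) {N : ℕ}
    (hμ : ∀ n ≥ N, ∀ U, ediam U ≤ R n → μ U ≤ C * R n ^ s) {U : Set Y} (hU : ediam U ≤ R N) :
    μ U ≤ C * K ^ s * ediam U ^ s := by
  rcases eq_or_ne (ediam U) 0 with hU0 | hU0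
  · have hlim : Tendsto (fun n => C * R n ^ s) atTop (𝓝 0) := by
      simpa [hs] using ENNReal.Tendsto.const_mul
        ((ENNReal.continuous_rpow_const.tendsto 0).comp hR) (Or.inr hC) (a := C) (b := 0 ^ s)
    have hμU : μ U ≤ 0 := ge_of_tendsto hlim
      (eventually_atTop.2 ⟨N, fun n hn => hμ n hn U (hU0.trans_le zero_le)⟩)
    exact hμU.trans zero_le
  · obtain ⟨n, hn, hUn, hnU⟩ := exists_le_and_succ_lt_of_tendsto hR (pos_iff_ne_zero.2 hU0) hU
    calc μ U ≤ C * R n ^ s := hμ n hn U hUn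
      _ ≤ C * (K * ediam U) ^ s := by gcongr; exact (hRK n).trans (by gcongr)
      _ = C * K ^ s * ediam U ^ s := by rw [ENNReal.mul_rpow_of_nonneg _ _ hs.le, mul_assoc]

end MassDistribution

lemma liminf_average_le_of_frequently_sum_lt {a : ℕ → ℝ} (ha : ∀ n, 0 ≤ a n) {s b : ℝ}
    (h : ∃ᶠ N : ℕ in atTop, ∑ n ∈ Finset.range N, a n < s * N + b) :
    liminf (fun N : ℕ => (1 / (N : ℝ)) * ∑ n ∈ Finset.range N, a n) atTop ≤ s := by
  refine le_of_forall_pos_le_add fun ε hε => ?_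
  have hb : ∀ᶠ N : ℕ in atTop, b < ε * N :=
    (tendsto_natCast_atTop_atTop.const_mul_atTop hε).eventually_gt_atTop b
  have hnonneg : ∀ N : ℕ, 0 ≤ 1 / (N : ℝ) * ∑ n ∈ Finset.range N, a n := fun N =>
    mul_nonneg (by positivity) (Finset.sum_nonneg fun n _ => ha n)
  refine liminf_le_of_frequently_le ?_ (isBoundedUnder_of ⟨0, hnonneg⟩)
  refine (h.and_eventually (hb.and (eventually_gt_atTop 0))).mono ?_
  rintro N ⟨hsum, hbN, hN⟩
  rw [one_div_mul_eq_div, div_le_iff₀ (Nat.cast_pos.2 hN)]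
  linarith

section Doubling

variable {Y : Type*} [PseudoMetricSpace Y] {D : ℕ}

lemma IsDoublingWith.exists_closedBall_subset_iUnion (hD : IsDoublingWith Y D) (x : Y) {R : ℝ}
    (hR : 0 < R) (m : ℕ) : ∃ t : Finset Y, t.card ≤ D ^ m ∧
      closedBall x R ⊆ ⋃ y ∈ t, closedBall y (R / 2 ^ m) := by
  induction m with
  | zero => exact ⟨{x}, by simp, by simp⟩
  | succ m ih =>
    obtain ⟨t, htcard, ht⟩ := ih
    choose g hgcard hg using fun y : Y => hD y (R / 2 ^ m) (by positivity)
    refine ⟨t.biUnion g, ?_, fun z hz => ?_⟩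
    · calc (t.biUnion g).card ≤ t.card * D :=
            Finset.card_biUnion_le_card_mul _ _ _ fun y _ => hgcard y
        _ ≤ D ^ (m + 1) := by rw [pow_succ]; gcongr
    · obtain ⟨y, hy, hzy⟩ := mem_iUnion₂.1 (ht hz)
      obtain ⟨w, hw, hzw⟩ := mem_iUnion₂.1 (hg y hzy)
      refine mem_iUnion₂.2 ⟨w, Finset.mem_biUnion.2 ⟨y, hy, hw⟩, ?_⟩
      rwa [pow_succ, ← div_div]

lemma le_dist_of_disjoint_interior_closedBall {x y : Y} {ε : ℝ} (hε : 0 < ε)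
    (h : Disjoint (interior (closedBall x ε)) (interior (closedBall y ε))) : ε ≤ dist x y := by
  by_contra! hlt
  exact disjoint_left.1 h (ball_subset_interior_closedBall (mem_ball'.2 hlt))
    (ball_subset_interior_closedBall (mem_ball_self hε))

variable {A : Type*} {s : Set A} {f : A → Y} {x : Y} {R ε : ℝ}

lemma IsDoublingWith.encard_le_of_pairwise_disjoint_interior (hD : IsDoublingWith Y D)
    (hR : 0 < R) {m : ℕ} (hm : 2 * (R / 2 ^ m) < ε) (hf : ∀ a ∈ s, f a ∈ closedBall x R)
    (hs : s.Pairwise fun a b =>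
      Disjoint (interior (closedBall (f a) ε)) (interior (closedBall (f b) ε))) :
    s.encard ≤ (D ^ m : ℕ) := by
  obtain ⟨t, htcard, ht⟩ := hD.exists_closedBall_subset_iUnion x hR m
  have hcover : ∀ a ∈ s, ∃ y ∈ t, f a ∈ closedBall y (R / 2 ^ m) := fun a ha => by
    simpa using ht (hf a ha)
  have : Nonempty Y := ⟨x⟩
  choose! g hgt hg using hcover
  have hinj : InjOn g s := by
    intro a ha b hb hab
    by_contra hne
    have hsep := le_dist_of_disjoint_interior_closedBall (hm.trans' (by positivity))
      (hs ha hb hne)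
    have hclose : dist (f a) (f b) ≤ R / 2 ^ m + R / 2 ^ m :=
      (dist_triangle_right _ _ (g a)).trans (add_le_add (hg a ha) (hab ▸ hg b hb))
    linarith
  calc s.encard ≤ (t : Set Y).encard := encard_le_encard_of_injOn (fun a ha => hgt a ha) hinj
    _ = t.card := encard_coe_eq_coe_finsetCard t
    _ ≤ (D ^ m : ℕ) := by exact_mod_cast htcard

lemma IsDoublingWith.finite_of_pairwise_disjoint_interior (hD : IsDoublingWith Y D)
    (hR : 0 < R) (hε : 0 < ε) (hf : ∀ a ∈ s, f a ∈ closedBall x R)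
    (hs : s.Pairwise fun a b =>
      Disjoint (interior (closedBall (f a) ε)) (interior (closedBall (f b) ε))) :
    s.Finite := by
  obtain ⟨m, hm⟩ := pow_unbounded_of_one_lt (2 * R / ε) (one_lt_two (α := ℝ))
  have hm' : 2 * (R / 2 ^ m) < ε := by
    rwa [← mul_div_assoc, div_lt_comm₀ (by positivity) hε]
  exact finite_of_encard_le_coe (hD.encard_le_of_pairwise_disjoint_interior hR hm' hf hs)

end Doubling

section Histories

open PiNat (res)

variable {α : Type*} {σ : List α → Set α} {p : ℕ → α}

/-- A history of Player 2's choices, latest choice first as in `PiNat.res`, is consistent with the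
strategy `σ` if each choice belongs to the set that `σ` offers after the preceding ones. -/
def IsConsistent (σ : List α → Set α) : List α → Prop
  | [] => True
  | a :: h => a ∈ σ h ∧ IsConsistent σ h

/-- An infinite sequence of choices of Player 2 is a play against `σ` if each choice belongs to the
set offered by `σ` after the preceding ones. -/
def IsPlay (σ : List α → Set α) (p : ℕ → α) : Prop :=
  ∀ n, p n ∈ σ (res p n)

lemma res_suffix_res (p : ℕ → α) {m n : ℕ} (hmn : m ≤ n) : res p m <:+ res p n := by
  induction n, hmn using Nat.le_induction with
  | base => exact List.suffix_rfl
  | succ n _ ih => exact ih.trans (List.suffix_cons _ _)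

lemma exists_res_length_eq [Nonempty α] (h : List α) : ∃ p : ℕ → α, res p h.length = h := by
  induction h with
  | nil => exact ⟨fun _ => Classical.arbitrary α, rfl⟩
  | cons a h ih =>
    obtain ⟨p, hp⟩ := ih
    have hagree : res (Function.update p h.length a) h.length = res p h.length :=
      PiNat.res_eq_res.2 fun {m} (hm : m < h.length) => Function.update_of_ne hm.ne _ _
    exact ⟨Function.update p h.length a, by
      rw [List.length_cons, PiNat.res_succ, hagree, hp, Function.update_self]⟩

lemma exists_res_eq_of_suffix_succ {h : ℕ → List α} (hsuffix : ∀ n, h n <:+ h (n + 1))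
    (hlength : ∀ n, (h n).length < (h (n + 1)).length) :
    ∃ p : ℕ → α, ∀ n, res p (h n).length = h n := by
  have hmono : ∀ {m n}, m ≤ n → h m <:+ h n := fun {m n} hmn =>
    Nat.le_induction List.suffix_rfl (fun n _ ih => ih.trans (hsuffix n)) n hmn
  have hle : ∀ n, n ≤ (h n).length := fun n => (strictMono_nat_of_lt_succ hlength).le_apply
  have hmove : ∀ i, ∃ a t, t.length = i ∧ a :: t <:+ h (i + 1) := fun i => by
    obtain ⟨a, t, hat⟩ := List.exists_cons_of_length_eq_add_one
      (l := (h (i + 1)).drop ((h (i + 1)).length - (i + 1))) (n := i) (by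
        rw [List.length_drop]; exact Nat.sub_sub_self (hle _))
    have := congrArg List.length hat
    have := hle (i + 1)
    refine ⟨a, t, ?_, hat ▸ List.drop_suffix _ _⟩
    grind
  choose p t ht hpt using hmove
  have hres : ∀ n g, g <:+ h n → res p g.length = g := by
    intro n g hg
    induction g with
    | nil => rfl
    | cons a g ih =>
      have hcons : a :: g = p g.length :: t g.length :=
        (List.suffix_of_suffix_length_le (hg.trans (hmono (le_max_left n (g.length + 1))))
          ((hpt g.length).trans (hmono (le_max_right _ _))) (by simp [ht])).eq_of_length
          (by simp [ht])
      rw [List.length_cons, PiNat.res_succ, ih ((List.suffix_cons a g).trans hg),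
        (List.cons.inj hcons).1]
  exact ⟨p, fun n => hres n _ List.suffix_rfl⟩

lemma isConsistent_res {n : ℕ} : IsConsistent σ (res p n) ↔ ∀ j < n, p j ∈ σ (res p j) := by
  induction n with
  | zero => simp [IsConsistent]
  | succ n ih => rw [PiNat.res_succ, IsConsistent, ih, Nat.forall_lt_succ_right, and_comm]

lemma IsPlay.isConsistent_res (hp : IsPlay σ p) (n : ℕ) : IsConsistent σ (res p n) :=
  _root_.isConsistent_res.2 fun j _ => hp j

lemma IsConsistent.of_suffix {u v : List α} (hv : IsConsistent σ v) (huv : u <:+ v) :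
    IsConsistent σ u := by
  induction v with
  | nil => rwa [List.suffix_nil.1 huv]
  | cons a v ih =>
    rcases List.suffix_cons_iff.1 huv with rfl | huv
    · exact hv
    · exact ih hv.2 huv

lemma exists_isPlay_frequently {Q : List α → Prop} (hQ : ∀ h, Q h → IsConsistent σ h)
    (hext : ∀ h, Q h → ∃ v, Q v ∧ h <:+ v ∧ h.length < v.length) {u : List α} (hu : Q u) :
    ∃ p, IsPlay σ p ∧ res p u.length = u ∧ ∃ᶠ n in atTop, Q (res p n) := by
  choose! next hQnext hsuffix hlength using hext
  have hQiter : ∀ n, Q (next^[n] u) := fun n => by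
    induction n with
    | zero => exact hu
    | succ n ih => rw [Function.iterate_succ_apply']; exact hQnext _ ih
  have hlt : ∀ n, (next^[n] u).length < (next^[n + 1] u).length := fun n => by
    rw [Function.iterate_succ_apply']; exact hlength _ (hQiter n)
  obtain ⟨p, hp⟩ := exists_res_eq_of_suffix_succ (h := fun n => next^[n] u)
    (fun n => by rw [Function.iterate_succ_apply']; exact hsuffix _ (hQiter n)) hlt
  have hle : ∀ n, n ≤ (next^[n] u).length := fun n => (strictMono_nat_of_lt_succ hlt).le_apply
  refine ⟨p, fun n => ?_, hp 0, frequently_atTop.2 fun n => ⟨_, hle n, (hp n).symm ▸ hQiter n⟩⟩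
  have hcons : IsConsistent σ (res p (next^[n + 1] u).length) := (hp (n + 1)).symm ▸ hQ _ (hQiter _)
  exact isConsistent_res.1 hcons n (hle (n + 1))

end Histories

section PlayWeight

open PiNat (res)

variable {α : Type*} {σ : List α → Set α} {p : ℕ → α}

/-- The probability that Player 2, choosing uniformly at random from the offered sets, produces a
given history. -/
noncomputable def playWeight (σ : List α → Set α) : List α → ℝ≥0∞
  | [] => 1
  | _ :: h => playWeight σ h / (σ h).encard

lemma tsum_playWeight_cons {h : List α} (hne : (σ h).Nonempty) (hfin : (σ h).Finite) :
    ∑' a : σ h, playWeight σ (a :: h) = playWeight σ h := by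
  simp only [playWeight, ENNReal.tsum_set_const]
  exact ENNReal.mul_div_cancel (by simpa using hne.ne_empty) (by simpa using hfin)

lemma playWeight_ne_zero (hfin : ∀ h, IsConsistent σ h → (σ h).Finite) {h : List α}
    (hc : IsConsistent σ h) : playWeight σ h ≠ 0 := by
  induction h with
  | nil => simp [playWeight]
  | cons a h ih => simpa [playWeight, hfin h hc.2] using ih hc.2

lemma playWeight_le_of_suffix {u v : List α} (hv : IsConsistent σ v) (huv : u <:+ v) :
    playWeight σ v ≤ playWeight σ u := by
  induction v with
  | nil => rw [List.suffix_nil.1 huv]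
  | cons a v ih =>
    rcases List.suffix_cons_iff.1 huv with rfl | huv
    · exact le_rfl
    · have hone : (1 : ℝ≥0∞) ≤ (σ v).encard := by
        exact_mod_cast Set.one_le_encard_iff_nonempty.2 ⟨a, hv.1⟩
      exact (ENNReal.div_le_of_le_mul (le_mul_of_one_le_right' hone)).trans (ih hv.2 huv)

/-- The total `playWeight` of the histories in `V` that extend `h`. A play through `h` avoids `V` as
long as this stays below the weight of the current history. -/
noncomputable def weightBelow (σ : List α → Set α) (V : Set (List α)) (h : List α) : ℝ≥0∞ :=
  ∑' v : {v | v ∈ V ∧ h <:+ v}, playWeight σ v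

lemma playWeight_le_weightBelow {V : Set (List α)} {h : List α} (hV : h ∈ V) :
    playWeight σ h ≤ weightBelow σ V h :=
  ENNReal.le_tsum (⟨h, hV, List.suffix_rfl⟩ : {v | v ∈ V ∧ h <:+ v})

lemma tsum_weightBelow_cons_le (A : Set α) (V : Set (List α)) (h : List α) :
    ∑' a : A, weightBelow σ V (a :: h) ≤ weightBelow σ V h := by
  simp only [weightBelow]
  rw [← ENNReal.tsum_sigma'
    (fun v : Σ a : A, {v | v ∈ V ∧ a.1 :: h <:+ v} => playWeight σ v.2)]
  refine ENNReal.tsum_comp_le_tsum_of_injective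
    (f := fun v : Σ a : A, {v | v ∈ V ∧ a.1 :: h <:+ v} =>
      (⟨v.2, v.2.2.1, (List.suffix_cons _ _).trans v.2.2.2⟩ : {v | v ∈ V ∧ h <:+ v}))
    ?_ (fun v => playWeight σ v)
  rintro ⟨⟨a, ha⟩, v, hv, hav⟩ ⟨⟨b, hb⟩, w, hw, hbw⟩ hvw
  obtain rfl : v = w := congrArg Subtype.val hvw
  obtain rfl : a = b := (List.cons.inj
    ((List.suffix_of_suffix_length_le hav hbw le_rfl).eq_of_length rfl)).1
  rfl

lemma exists_weightBelow_cons_lt {V : Set (List α)} {h : List α} (hne : (σ h).Nonempty)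
    (hfin : (σ h).Finite) (hlt : weightBelow σ V h < playWeight σ h) :
    ∃ a ∈ σ h, weightBelow σ V (a :: h) < playWeight σ (a :: h) := by
  by_contra! hle
  refine hlt.not_ge ?_
  calc playWeight σ h = ∑' a : σ h, playWeight σ (a :: h) := (tsum_playWeight_cons hne hfin).symm
    _ ≤ ∑' a : σ h, weightBelow σ V (a :: h) := ENNReal.tsum_le_tsum fun a => hle a a.2
    _ ≤ weightBelow σ V h := tsum_weightBelow_cons_le _ _ _

lemma playWeight_le_tsum_of_forall_exists_res_mem
    (hne : ∀ h, IsConsistent σ h → (σ h).Nonempty) (hfin : ∀ h, IsConsistent σ h → (σ h).Finite)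
    {V : Set (List α)} {u : List α} (hu : IsConsistent σ u)
    (hV : ∀ p, IsPlay σ p → res p u.length = u → ∃ n, res p n ∈ V) :
    playWeight σ u ≤ ∑' v : V, playWeight σ v := by
  by_contra! hlt
  have huV : ∀ v ∈ V, ¬ v <:+ u := fun v hv hvu =>
    hlt.not_ge ((playWeight_le_of_suffix hu hvu).trans (ENNReal.le_tsum (⟨v, hv⟩ : V)))
  have hult : weightBelow σ V u < playWeight σ u :=
    (ENNReal.tsum_mono_subtype _ fun v hv => hv.1).trans_lt hlt
  obtain ⟨p, hp, hpu, hfreq⟩ := exists_isPlay_frequently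
    (Q := fun h => IsConsistent σ h ∧ (∀ v ∈ V, ¬ v <:+ h) ∧ weightBelow σ V h < playWeight σ h)
    (fun h hQ => hQ.1) (fun h ⟨hc, hhV, hhlt⟩ => by
      obtain ⟨a, ha, halt⟩ := exists_weightBelow_cons_lt (hne h hc) (hfin h hc) hhlt
      refine ⟨a :: h, ⟨⟨ha, hc⟩, fun v hv hva => ?_, halt⟩, List.suffix_cons _ _, by simp⟩
      rcases List.suffix_cons_iff.1 hva with rfl | hvh
      · exact halt.not_ge (playWeight_le_weightBelow hv)
      · exact hhV v hv hvh) ⟨hu, huV, hult⟩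
  obtain ⟨n, hn⟩ := hV p hp hpu
  obtain ⟨m, ⟨-, havoid, -⟩, hnm⟩ := (hfreq.and_eventually (eventually_ge_atTop n)).exists
  exact havoid _ hn (res_suffix_res p hnm)

/-- The law of the play when Player 2 chooses uniformly at random, as the outer measure whose value
on a set is the infimum of the total weights of families of histories such that each play in the set
passes through one of them. -/
noncomputable def playOuterMeasure (σ : List α → Set α) :
    MeasureTheory.OuterMeasure {p // IsPlay σ p} where
  measureOf E := ⨅ (V : Set (List α)) (_ : ∀ p ∈ E, ∃ n, res p.1 n ∈ V), ∑' v : V, playWeight σ v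
  empty := by
    refine le_antisymm (iInf₂_le_of_le ∅ (by simp) (by simp)) zero_le
  mono hEF := le_iInf₂ fun V hV => iInf₂_le V fun p hp => hV p (hEF hp)
  iUnion_nat E _ := by
    refine ENNReal.le_of_forall_pos_le_add fun ε hε hlt => ?_
    obtain ⟨ε', hε', hsum⟩ := ENNReal.exists_pos_sum_of_countable' (ENNReal.coe_pos.2 hε).ne' ℕ
    have hV : ∀ i, ∃ V : Set (List α), (∀ p ∈ E i, ∃ n, res p.1 n ∈ V) ∧
        ∑' v : V, playWeight σ v < (⨅ (V : Set (List α)) (_ : ∀ p ∈ E i, ∃ n, res p.1 n ∈ V),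
          ∑' v : V, playWeight σ v) + ε' i := fun i => by
      simpa only [iInf_lt_iff, exists_prop] using
        ENNReal.lt_add_right (ENNReal.ne_top_of_tsum_ne_top hlt.ne i) (hε' i).ne'
    choose V hVE hVlt using hV
    refine (iInf₂_le (⋃ i, V i) fun p hp => ?_).trans ?_
    · obtain ⟨i, hi⟩ := mem_iUnion.1 hp
      obtain ⟨n, hn⟩ := hVE i p hi
      exact ⟨n, mem_iUnion.2 ⟨i, hn⟩⟩
    · calc ∑' v : ⋃ i, V i, playWeight σ v ≤ ∑' i, ∑' v : V i, playWeight σ v :=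
            ENNReal.tsum_iUnion_le_tsum (playWeight σ) V
        _ ≤ _ := ENNReal.tsum_le_tsum fun i => (hVlt i).le
        _ = _ := ENNReal.tsum_add
        _ ≤ _ := by gcongr

lemma playOuterMeasure_le {E : Set {p // IsPlay σ p}} {V : Set (List α)}
    (hV : ∀ p ∈ E, ∃ n, res p.1 n ∈ V) : playOuterMeasure σ E ≤ ∑' v : V, playWeight σ v :=
  iInf₂_le V hV

lemma playWeight_le_playOuterMeasure (hne : ∀ h, IsConsistent σ h → (σ h).Nonempty)
    (hfin : ∀ h, IsConsistent σ h → (σ h).Finite) {u : List α} (hu : IsConsistent σ u) :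
    playWeight σ u ≤ playOuterMeasure σ {p | res p.1 u.length = u} :=
  le_iInf₂ fun _ hV => playWeight_le_tsum_of_forall_exists_res_mem hne hfin hu
    fun p hp hpu => hV ⟨p, hp⟩ hpu

lemma IsPlay.playWeight_res (hfin : ∀ h, IsConsistent σ h → (σ h).Finite) (hp : IsPlay σ p)
    (N : ℕ) : playWeight σ (res p N) =
      ENNReal.ofReal (Real.exp (-∑ n ∈ Finset.range N, Real.log (σ (res p n)).ncard)) := by
  induction N with
  | zero => simp [playWeight]
  | succ N ih =>
    have hfinN := hfin _ (hp.isConsistent_res N)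
    have hcard : (0 : ℝ) < (σ (res p N)).ncard := by
      exact_mod_cast (ncard_pos hfinN).2 ⟨_, hp N⟩
    rw [PiNat.res_succ, playWeight, ih, Finset.sum_range_succ, neg_add, Real.exp_add,
      Real.exp_neg (Real.log _), Real.exp_log hcard, ← div_eq_mul_inv,
      ENNReal.ofReal_div_of_pos hcard, ENNReal.ofReal_natCast, ← hfinN.cast_ncard_eq]
    simp

lemma IsPlay.sum_log_ncard_lt (hfin : ∀ h, IsConsistent σ h → (σ h).Finite) (hp : IsPlay σ p)
    {t : ℝ} {N : ℕ} (hw : ENNReal.ofReal (Real.exp (-t)) < playWeight σ (res p N)) :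
    ∑ n ∈ Finset.range N, Real.log (σ (res p n)).ncard < t := by
  rw [hp.playWeight_res hfin, ENNReal.ofReal_lt_ofReal_iff (Real.exp_pos _), Real.exp_lt_exp] at hw
  linarith

lemma IsPlay.liminf_average_log_ncard_div_le (hfin : ∀ h, IsConsistent σ h → (σ h).Finite)
    (hp : IsPlay σ p) {θ ρ : ℝ} (hθ : θ ∈ Set.Ioo (0 : ℝ) 1) (hρ : 0 < ρ) {s : ℝ}
    (hw : ∃ᶠ n in atTop, ENNReal.ofReal (θ ^ n * ρ) ^ s < playWeight σ (res p n)) :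
    liminf (fun N : ℕ => (1 / (N : ℝ)) * ∑ n ∈ Finset.range N,
      Real.log (σ (res p n)).ncard / Real.log (1 / θ)) atTop ≤ s := by
  have hL : 0 < Real.log (1 / θ) := Real.log_pos ((one_lt_div hθ.1).2 hθ.2)
  refine liminf_average_le_of_frequently_sum_lt (b := -(s * Real.log ρ) / Real.log (1 / θ))
    (fun n => div_nonneg (Real.log_natCast_nonneg _) hL.le) (hw.mono fun N hN => ?_)
  have hscale : ENNReal.ofReal (θ ^ N * ρ) ^ s =
      ENNReal.ofReal (Real.exp (-(s * N * Real.log (1 / θ) - s * Real.log ρ))) := by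
    have hpos : 0 < θ ^ N * ρ := mul_pos (pow_pos hθ.1 N) hρ
    rw [ENNReal.ofReal_rpow_of_pos hpos, Real.rpow_def_of_pos hpos,
      Real.log_mul (pow_pos hθ.1 N).ne' hρ.ne', Real.log_pow, one_div, Real.log_inv]
    ring_nf
  rw [← Finset.sum_div, div_lt_iff₀ hL, add_mul, div_mul_cancel₀ _ hL.ne', ← sub_eq_add_neg]
  exact hp.sum_log_ncard_lt hfin (hscale ▸ hN)

end PlayWeight

section LimitSet

open MeasureTheory Measure
open PiNat (res)
open scoped Topology

variable {α : Type*} {σ : List α → Set α} {Y : Type*} {lim : {p // IsPlay σ p} → Y}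

lemma playOuterMeasure_preimage_inter_cylinder_le {U : Set Y} {n C : ℕ} {c : ℝ≥0∞} {u : List α}
    (hun : u.length ≤ n)
    (hcount : ((fun p => res p.1 n) '' (lim ⁻¹' U)).encard ≤ C)
    (hw : ∀ v, IsConsistent σ v → u <:+ v → v.length = n → playWeight σ v ≤ c) :
    playOuterMeasure σ (lim ⁻¹' U ∩ {p | res p.1 u.length = u}) ≤ C * c := by
  set V : Set (List α) := (fun p => res p.1 n) '' (lim ⁻¹' U ∩ {p | res p.1 u.length = u})
  have hVC : (V.encard : ℝ≥0∞) ≤ C := by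
    exact_mod_cast (encard_le_encard (image_mono inter_subset_left)).trans hcount
  calc playOuterMeasure σ (lim ⁻¹' U ∩ {p | res p.1 u.length = u})
      ≤ ∑' v : V, playWeight σ v :=
        playOuterMeasure_le fun p hp => ⟨n, mem_image_of_mem (fun p => res p.1 n) hp⟩
    _ ≤ ∑' _ : V, c := by
        refine ENNReal.tsum_le_tsum ?_
        rintro ⟨_, p, ⟨-, hpu⟩, rfl⟩
        have hsuffix : u <:+ res p.1 n := by
          rw [← show res p.1 u.length = u from hpu]
          exact res_suffix_res p.1 hun
        exact hw _ (p.2.isConsistent_res n) hsuffix (PiNat.res_length _ _)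
    _ = V.encard * c := ENNReal.tsum_set_const _ _
    _ ≤ C * c := by gcongr

variable [EMetricSpace Y] [MeasurableSpace Y] [BorelSpace Y] {R : ℕ → ℝ≥0∞}

lemma hausdorffMeasure_range_ne_zero (hne : ∀ h, IsConsistent σ h → (σ h).Nonempty)
    (hfin : ∀ h, IsConsistent σ h → (σ h).Finite) {s : ℝ} (hs : 0 < s) {K : ℝ≥0∞} (hK : K ≠ ⊤)
    (hR0 : ∀ n, R n ≠ 0) (hR : Tendsto R atTop (𝓝 0)) (hRK : ∀ n, R n ≤ K * R (n + 1))
    {C : ℕ} (hcount : ∀ n U, ediam U ≤ R n → ((fun p => res p.1 n) '' (lim ⁻¹' U)).encard ≤ C)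
    {u : List α} (hu : IsConsistent σ u)
    (hw : ∀ v, IsConsistent σ v → u <:+ v → u.length < v.length →
      playWeight σ v ≤ R v.length ^ s) :
    μH[s] (range lim) ≠ 0 := by
  intro hzero
  set cylinder : Set {p // IsPlay σ p} := {p | res p.1 u.length = u}
  set μ := OuterMeasure.map lim (OuterMeasure.restrict cylinder (playOuterMeasure σ))
  have hμ : ∀ n ≥ u.length + 1, ∀ U, ediam U ≤ R n → μ U ≤ C * R n ^ s := fun n hn U hU => by
    rw [OuterMeasure.map_apply, OuterMeasure.restrict_apply]
    refine playOuterMeasure_preimage_inter_cylinder_le (Nat.le_of_succ_le hn) (hcount n U hU)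
      fun v hv huv hvn => (hw v hv huv (by omega)).trans_eq (by rw [hvn])
  have hμzero : μ (range lim) = 0 :=
    outerMeasure_eq_zero_of_hausdorffMeasure_eq_zero
      (ENNReal.mul_ne_top (ENNReal.natCast_ne_top C) (ENNReal.rpow_ne_top_of_nonneg hs.le hK))
      (pos_iff_ne_zero.2 (hR0 (u.length + 1)))
      (fun U => le_mul_ediam_rpow_of_le_scale hs (ENNReal.natCast_ne_top C) hR hRK hμ) hzero
  refine playWeight_ne_zero hfin hu (le_zero_iff.1 ?_)
  calc playWeight σ u ≤ playOuterMeasure σ cylinder := playWeight_le_playOuterMeasure hne hfin hu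
    _ = μ (range lim) := by
        rw [OuterMeasure.map_apply, OuterMeasure.restrict_apply, preimage_range, univ_inter]
    _ = 0 := hμzero

lemma exists_isPlay_frequently_lt_playWeight (hne : ∀ h, IsConsistent σ h → (σ h).Nonempty)
    (hfin : ∀ h, IsConsistent σ h → (σ h).Finite) {s : ℝ} (hs : 0 < s) {K : ℝ≥0∞} (hK : K ≠ ⊤)
    (hR0 : ∀ n, R n ≠ 0) (hR : Tendsto R atTop (𝓝 0)) (hRK : ∀ n, R n ≤ K * R (n + 1))
    {C : ℕ} (hcount : ∀ n U, ediam U ≤ R n → ((fun p => res p.1 n) '' (lim ⁻¹' U)).encard ≤ C)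
    (hzero : μH[s] (range lim) = 0) :
    ∃ p, IsPlay σ p ∧ ∃ᶠ n in atTop, R n ^ s < playWeight σ (res p n) := by
  have hext : ∀ u, IsConsistent σ u → ∃ v, (IsConsistent σ v ∧ R v.length ^ s < playWeight σ v) ∧
      u <:+ v ∧ u.length < v.length := fun u hu => by
    by_contra! hle
    refine hausdorffMeasure_range_ne_zero hne hfin hs hK hR0 hR hRK hcount hu ?_ hzero
    exact fun v hv huv hlt => not_lt.1 fun hheavy => (hle v ⟨hv, hheavy⟩ huv).not_gt hlt
  obtain ⟨u, hu, -⟩ := hext [] trivial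
  obtain ⟨p, hp, -, hfreq⟩ :=
    exists_isPlay_frequently (fun h hh => hh.1) (fun h hh => hext h hh.1) hu
  exact ⟨p, hp, hfreq.mono fun n hn => by simpa using hn.2⟩

end LimitSet

section SchmidtGame

open PiNat (res)
open scoped Topology

variable {β ρ : ℝ} {c : X} {Ti : Set (List X)} {k : ℕ} {τ : List (List X) → Set (List X)}

/-- The closed ball associated with a position of a `(β,β)`-Schmidt subgame whose initial ball is
`B̄(c,ρ)`; the empty position gets the initial ball. -/
def positionBall (β : ℝ) (c : X) (ρ : ℝ) (q : List X) : Set X :=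
  closedBall (q.getLastD c) (β ^ q.length * ρ)

lemma IsBetaSchmidtTree.positionBall_subset (hT : IsBetaSchmidtTree β c ρ Ti) {q q' : List X}
    (hq' : q' ∈ Ti) (hqq' : q <+: q') : positionBall β c ρ q' ⊆ positionBall β c ρ q := by
  obtain ⟨l, rfl⟩ := hqq'
  induction l using List.reverseRecOn with
  | nil => simp
  | append_singleton l a ih =>
    rw [← List.append_assoc] at hq' ⊢
    refine Subset.trans ?_ (ih (hT.1.2.1 _ hq' _ (List.prefix_append _ _)))
    generalize q ++ l = w at hq'
    have hball := hT.2 _ hq' w.length (by simp)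
    rw [positionBall, positionBall, List.getLastD_concat]
    rcases List.eq_nil_or_concat' w with rfl | ⟨w, b, rfl⟩
    · simpa using hball
    · simpa [List.getD_append, List.getD_append_right] using hball

-- Histories are stored latest choice first below, so the strategy `τ` enters as `τ ∘ List.reverse`
-- and `h.headD []` is the current position after the history `h`.
lemma histList_eq_reverse_res {Y : Type*} (p : ℕ → List Y) (n : ℕ) :
    histList p n = (res p n).reverse := by
  induction n with
  | zero => rfl
  | succ n ih =>
    rw [PiNat.res_succ, List.reverse_cons, ← ih]
    exact List.ofFn_succ_last

lemma Valid1.of_isConsistent (hv : Valid1 β c ρ Ti k τ) {h : List (List X)}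
    (hc : IsConsistent (τ ∘ List.reverse) h) :
    (τ h.reverse).Nonempty ∧
    (∀ q ∈ τ h.reverse, q ∈ Ti ∧ q.length = (h.length + 1) * k ∧ h.headD [] <+: q) ∧
    (τ h.reverse).Pairwise fun q q' =>
      Disjoint (interior (positionBall β c ρ q)) (interior (positionBall β c ρ q')) := by
  obtain ⟨n, p, rfl⟩ : ∃ n p, res p n = h := ⟨_, exists_res_length_eq h⟩
  have hlegal := hv p n fun j hj => by
    simpa only [histList_eq_reverse_res, Function.comp_apply] using isConsistent_res.1 hc j hj
  rw [histList_eq_reverse_res] at hlegal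
  obtain ⟨hne, hext, hdisj⟩ := hlegal
  refine ⟨hne, fun q hq => ⟨(hext q hq).1, ?_, ?_⟩, fun q hq q' hq' hqq' => ?_⟩
  · rw [PiNat.res_length, (hext q hq).2.1]
  · cases n with
    | zero => exact List.nil_prefix
    | succ n => exact (hext q hq).2.2.resolve_left n.succ_ne_zero
  · simpa only [positionBall, (hext q hq).2.1, (hext q' hq').2.1] using hdisj hq hq' hqq'

lemma Valid1.length_headD (hv : Valid1 β c ρ Ti k τ) {h : List (List X)}
    (hc : IsConsistent (τ ∘ List.reverse) h) : (h.headD []).length = h.length * k := by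
  cases h with
  | nil => simp
  | cons q h => exact ((hv.of_isConsistent hc.2).2.1 q hc.1).2.1

lemma Valid1.positionBall_headD (hv : Valid1 β c ρ Ti k τ) {h : List (List X)}
    (hc : IsConsistent (τ ∘ List.reverse) h) :
    positionBall β c ρ (h.headD []) =
      closedBall ((h.headD []).getLastD c) ((β ^ k) ^ h.length * ρ) := by
  rw [positionBall, hv.length_headD hc, mul_comm h.length, pow_mul]

lemma Valid1.positionBall_subset_headD (hv : Valid1 β c ρ Ti k τ)
    (hT : IsBetaSchmidtTree β c ρ Ti) {h : List (List X)} {q : List X}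
    (hc : IsConsistent (τ ∘ List.reverse) (q :: h)) :
    positionBall β c ρ q ⊆ positionBall β c ρ (h.headD []) :=
  have hq := (hv.of_isConsistent hc.2).2.1 q hc.1
  hT.positionBall_subset hq.1 hq.2.2

lemma Valid1.disjoint_interior_positionBall_headD (hv : Valid1 β c ρ Ti k τ)
    (hT : IsBetaSchmidtTree β c ρ Ti) {h h' : List (List X)}
    (hc : IsConsistent (τ ∘ List.reverse) h) (hc' : IsConsistent (τ ∘ List.reverse) h')
    (hlength : h.length = h'.length) (hne : h ≠ h') :
    Disjoint (interior (positionBall β c ρ (h.headD [])))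
      (interior (positionBall β c ρ (h'.headD []))) := by
  induction h generalizing h' with
  | nil => exact absurd (List.length_eq_zero_iff.1 hlength.symm).symm hne
  | cons q h ih =>
    obtain ⟨q', h', rfl⟩ := List.exists_cons_of_length_eq_add_one hlength.symm
    by_cases hh : h = h'
    · subst hh
      exact (hv.of_isConsistent hc.2).2.2 hc.1 hc'.1 fun hqq' => hne (congrArg (· :: h) hqq')
    · exact (ih hc.2 hc'.2 (Nat.succ_injective hlength) hh).mono
        (interior_mono (hv.positionBall_subset_headD hT hc))
        (interior_mono (hv.positionBall_subset_headD hT hc'))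

lemma Valid1.finite {D : ℕ} (hv : Valid1 β c ρ Ti k τ) (hD : IsDoublingWith X D) (hβ : 0 < β)
    (hρ : 0 < ρ) (hT : IsBetaSchmidtTree β c ρ Ti) {h : List (List X)}
    (hc : IsConsistent (τ ∘ List.reverse) h) : (τ h.reverse).Finite := by
  obtain ⟨-, hpos, hdisj⟩ := hv.of_isConsistent hc
  have hε : 0 < β ^ ((h.length + 1) * k) * ρ := by positivity
  refine hD.finite_of_pairwise_disjoint_interior (f := fun q => q.getLastD c) (x := c) hρ hε
    (fun q hq => ?_) (fun q hq q' hq' hqq' => ?_)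
  · have hsub := hT.positionBall_subset (hpos q hq).1 List.nil_prefix
    have hmem := hsub (mem_closedBall_self (by positivity))
    simpa [positionBall] using hmem
  · simpa only [positionBall, (hpos q hq).2.1, (hpos q' hq').2.1] using hdisj hq hq' hqq'

lemma Valid1.exists_forall_mem_positionBall [CompleteSpace X] (hv : Valid1 β c ρ Ti k τ)
    (hβ : β ∈ Set.Ioo (0 : ℝ) 1) (hρ : 0 < ρ) (hk : k ≠ 0) (hT : IsBetaSchmidtTree β c ρ Ti)
    {p : ℕ → List X} (hp : IsPlay (τ ∘ List.reverse) p) :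
    ∃ x, ∀ n, x ∈ positionBall β c ρ ((res p n).headD []) := by
  have hβ0 := hβ.1
  have hball : ∀ n, positionBall β c ρ ((res p n).headD []) =
      closedBall (((res p n).headD []).getLastD c) ((β ^ k) ^ n * ρ) := fun n => by
    rw [hv.positionBall_headD (hp.isConsistent_res n), PiNat.res_length]
  have hanti : Antitone fun n => positionBall β c ρ ((res p n).headD []) :=
    antitone_nat_of_succ_le fun n =>
      hv.positionBall_subset_headD hT (hp.isConsistent_res (n + 1))
  have hcenter : ∀ n, ((res p n).headD []).getLastD c ∈ positionBall β c ρ ((res p n).headD []) :=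
    fun n => mem_closedBall_self (by positivity)
  have hradius : Tendsto (fun n => 2 * ((β ^ k) ^ n * ρ)) atTop (𝓝 0) := by
    simpa using ((tendsto_pow_atTop_nhds_zero_of_lt_one (by positivity)
      (pow_lt_one₀ hβ0.le hβ.2 hk)).mul_const ρ).const_mul 2
  have hdiam : ∀ n, diam (positionBall β c ρ ((res p n).headD [])) ≤ 2 * ((β ^ k) ^ n * ρ) :=
    fun n => by rw [hball]; exact diam_closedBall (by positivity)
  exact (nonempty_iInter_of_nonempty_biInter (fun n => isClosed_closedBall)
    (fun n => isBounded_closedBall)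
    (fun N => ⟨_, mem_iInter₂.2 fun n hn => hanti hn (hcenter N)⟩)
    (squeeze_zero (fun n => diam_nonneg) hdiam hradius)).imp fun x hx => mem_iInter.1 hx

lemma Valid1.encard_image_res_preimage_le {D : ℕ} (hv : Valid1 β c ρ Ti k τ)
    (hD : IsDoublingWith X D) (hβ : 0 < β) (hρ : 0 < ρ) (hT : IsBetaSchmidtTree β c ρ Ti)
    {lim : {p // IsPlay (τ ∘ List.reverse) p} → X}
    (hlim : ∀ p n, lim p ∈ positionBall β c ρ ((res p.1 n).headD []))
    {n : ℕ} {U : Set X} (hU : ediam U ≤ ENNReal.ofReal ((β ^ k) ^ n * ρ)) :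
    ((fun p => res p.1 n) '' (lim ⁻¹' U)).encard ≤ (D ^ 3 : ℕ) := by
  have hR : 0 < (β ^ k) ^ n * ρ := by positivity
  rcases (lim ⁻¹' U).eq_empty_or_nonempty with hempty | ⟨p₀, hp₀⟩
  · simp [hempty]
  refine hD.encard_le_of_pairwise_disjoint_interior (f := fun h => (h.headD []).getLastD c)
    (x := lim p₀) (R := 2 * ((β ^ k) ^ n * ρ)) (ε := (β ^ k) ^ n * ρ) (by positivity)
    (by linarith) ?_ ?_
  · rintro _ ⟨p, hp, rfl⟩
    have hcenter := hlim p n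
    rw [hv.positionBall_headD (p.2.isConsistent_res n), PiNat.res_length,
      mem_closedBall'] at hcenter
    have hdist : dist (lim p) (lim p₀) ≤ (β ^ k) ^ n * ρ := by
      rw [← ENNReal.ofReal_le_ofReal_iff hR.le, ← edist_dist]
      exact (edist_le_ediam_of_mem (mem_preimage.1 hp) (mem_preimage.1 hp₀)).trans hU
    rw [mem_closedBall, two_mul]
    exact (dist_triangle _ _ _).trans (add_le_add hcenter hdist)
  · rintro _ ⟨p, -, rfl⟩ _ ⟨p', -, rfl⟩ hne
    have hdisj := hv.disjoint_interior_positionBall_headD hT (p.2.isConsistent_res n)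
      (p'.2.isConsistent_res n) (by rw [PiNat.res_length, PiNat.res_length]) hne
    rwa [hv.positionBall_headD (p.2.isConsistent_res n),
      hv.positionBall_headD (p'.2.isConsistent_res n), PiNat.res_length,
      PiNat.res_length] at hdisj

lemma isPlay_comp_reverse_iff {Y : Type*} {τ : List (List Y) → Set (List Y)} {p : ℕ → List Y} :
    IsPlay (τ ∘ List.reverse) p ↔ ∀ n, p n ∈ τ (histList p n) := by
  simp only [IsPlay, histList_eq_reverse_res, Function.comp_apply]

lemma Valid1.exists_play_liminf_le [CompleteSpace X] [MeasurableSpace X] [BorelSpace X] {D : ℕ}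
    (hv : Valid1 β c ρ Ti k τ) (hD : IsDoublingWith X D) (hβ : β ∈ Set.Ioo (0 : ℝ) 1)
    (hρ : 0 < ρ) (hk : k ≠ 0) (hT : IsBetaSchmidtTree β c ρ Ti) {s : ℝ} (hs : 0 < s) {S : Set X}
    (hS : MeasureTheory.Measure.hausdorffMeasure s S = 0)
    (hpS : ∀ p : ℕ → List X, (∀ n, p n ∈ τ (histList p n)) →
      (⋂ n, closedBall ((p n).getLastD c) (β ^ ((n + 1) * k) * ρ)) ⊆ S) :
    ∃ p : ℕ → List X, (∀ n, p n ∈ τ (histList p n)) ∧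
      liminf (fun N : ℕ => (1 / (N : ℝ)) * ∑ n ∈ Finset.range N,
        Real.log ((τ (histList p n)).ncard) / (k * Real.log (1 / β))) atTop ≤ s := by
  have hθ : β ^ k ∈ Set.Ioo (0 : ℝ) 1 := ⟨pow_pos hβ.1 k, pow_lt_one₀ hβ.1.le hβ.2 hk⟩
  have hfin : ∀ h, IsConsistent (τ ∘ List.reverse) h → (τ h.reverse).Finite :=
    fun h hc => hv.finite hD hβ.1 hρ hT hc
  choose lim hlim using fun p : {p // IsPlay (τ ∘ List.reverse) p} =>
    hv.exists_forall_mem_positionBall hβ hρ hk hT p.2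
  have hlimS : range lim ⊆ S := by
    rintro _ ⟨p, rfl⟩
    refine hpS p.1 (isPlay_comp_reverse_iff.1 p.2) (mem_iInter.2 fun n => ?_)
    have hmem := hlim p (n + 1)
    rwa [positionBall, hv.length_headD (p.2.isConsistent_res _), PiNat.res_length] at hmem
  have hscale : Tendsto (fun n => ENNReal.ofReal ((β ^ k) ^ n * ρ)) atTop (𝓝 0) := by
    simpa using ENNReal.tendsto_ofReal
      ((tendsto_pow_atTop_nhds_zero_of_lt_one hθ.1.le hθ.2).mul_const ρ)
  have hratio : ∀ n, ENNReal.ofReal ((β ^ k) ^ n * ρ) ≤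
      ENNReal.ofReal (β ^ k)⁻¹ * ENNReal.ofReal ((β ^ k) ^ (n + 1) * ρ) := fun n => by
    rw [← ENNReal.ofReal_mul (inv_nonneg.2 hθ.1.le), pow_succ', mul_assoc,
      inv_mul_cancel_left₀ hθ.1.ne']
  obtain ⟨p, hp, hheavy⟩ := exists_isPlay_frequently_lt_playWeight
    (fun h hc => (hv.of_isConsistent hc).1) hfin hs ENNReal.ofReal_ne_top
    (fun n => (ENNReal.ofReal_pos.2 (mul_pos (pow_pos hθ.1 n) hρ)).ne') hscale hratio
    (fun n U hU => hv.encard_image_res_preimage_le hD hβ.1 hρ hT hlim hU)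
    (MeasureTheory.measure_mono_null hlimS hS)
  refine ⟨p, isPlay_comp_reverse_iff.1 hp, ?_⟩
  simpa only [one_div, ← inv_pow, Real.log_pow, histList_eq_reverse_res, Function.comp_apply]
    using hp.liminf_average_log_ncard_div_le hfin hθ hρ hheavy

end SchmidtGame

/-- Upper bound on the value of the non-overlapping dimension game: if Player 1 has a pure
strategy guaranteeing `δ` in the non-overlapping Hausdorff dimension game associated with a
`(β,β)`-Schmidt subgame with target set `S`, then `dim_H S ≥ δ`. -/
theorem dimH_ge_of_player1_guarantees [CompleteSpace X] (D : ℕ) (hD : IsDoublingWith X D)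
    (β : ℝ) (hβ : β ∈ Set.Ioo (0 : ℝ) 1) (S : Set X)
    (ι : Type*) [Nonempty ι] (c : ι → X) (r : ι → ℝ) (hr : ∀ i, 0 < r i)
    (T : ι → Set (List X)) (hT : ∀ i, IsBetaSchmidtTree β (c i) (r i) (T i))
    (δ : ℝ)
    (hstrat : ∃ (i : ι) (k : ℕ), 1 ≤ k ∧ ∃ τ : List (List X) → Set (List X),
      Valid1 β (c i) (r i) (T i) k τ ∧ Guarantees1 β (c i) (r i) S k τ δ) :
    ENNReal.ofReal δ ≤ dimH S := by
  obtain ⟨i, k, hk, τ, hv, hguar⟩ := hstrat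
  by_contra! hlt
  borelize X
  obtain ⟨s, hSs, hsδ⟩ := ENNReal.lt_iff_exists_nnreal_btwn.1 hlt
  have hs : (0 : ℝ) < s := by exact_mod_cast zero_le.trans_lt hSs
  have hsδ' : (s : ℝ) < δ := by
    rwa [← ENNReal.ofReal_coe_nnreal, ENNReal.ofReal_lt_ofReal_iff_of_nonneg hs.le] at hsδ
  have hpS : ∀ p : ℕ → List X, (∀ n, p n ∈ τ (histList p n)) →
      (⋂ n, closedBall ((p n).getLastD (c i)) (β ^ ((n + 1) * k) * r i)) ⊆ S := fun p hp => by
    by_contra hescape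
    have hpayoff := hguar p hp
    rw [if_neg hescape] at hpayoff
    linarith
  obtain ⟨p, hp, hliminf⟩ := hv.exists_play_liminf_le hD hβ (hr i) (Nat.one_le_iff_ne_zero.1 hk)
    (hT i) hs (hausdorffMeasure_of_dimH_lt hSs) hpS
  have hpayoff := hguar p hp
  rw [if_pos (hpS p hp)] at hpayoff
  exact (hpayoff.trans hliminf).not_gt hsδ'
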